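/- Let G ≅ C_m ⋉_φ C_{mn} for positive integers m, n. Then every sequence S over G of length |S| = 2m + 2mn − 3 contains a product-one subsequence T of length exactly mn. -/

import Mathlib

/-- A sequence (multiset) over `G` is product-one if its terms can be ordered so
that their product equals `1`. -/
def IsProductOne {G : Type*} [Group G] (S : Multiset G) : Prop :=
  ∃ l : List G, (l : Multiset G) = S ∧ l.prod = 1

/-!
Let `C_{mn} = ⟨x⟩`, `C_m = ⟨y⟩` and let `p` be the smallest prime factor of `m`. The action of `y`
raises `x` to a power `r` with `r ^ m ≡ 1` modulo `p`, and `m` is coprime to `p - 1`, so `r ≡ 1`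
modulo `p`. Hence the exponents of `x` and `y` modulo `p` add up under multiplication, and Kemnitz'
theorem for `(ℤ/p)²` finds among any `4p - 3` terms a block of `p` whose product lies in
`⟨x ^ p⟩⟨y ^ p⟩`. Replacing disjoint blocks by their products reduces `m` to `m / p`; at `m = 1`
the claim is the Erdős–Ginzburg–Ziv theorem.

Kemnitz' theorem is proved by Reiher's argument. Polynomials of low degree have vanishing
alternating sums over the vertices of a cube, which gives linear relations modulo `p` between the
numbers `(k | J)` of `k`-element zero-sum subsets of `J`. For odd `p`, were
`(p | J) = 0` with `#J = 4p - 3`, these relations together with a double count would force `2 ≡ 0`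
modulo `p`.
-/

open Finset

section BooleanCube

variable {ι R : Type*} [CommRing R]

theorem sum_neg_one_pow_card_of_superset [DecidableEq ι] {D J : Finset ι} (hJD : ¬ J ⊆ D) :
    ∑ T ∈ J.powerset with D ⊆ T, (-1 : R) ^ #T = 0 := by
  obtain ⟨j, hjJ, hjD⟩ := not_subset.1 hJD
  have hj : j ∉ J.erase j := notMem_erase j J
  rw [sum_filter, ← insert_erase hjJ, sum_powerset_insert hj, ← sum_add_distrib]
  refine sum_eq_zero fun T hT => ?_
  have hjT : j ∉ T := fun h => hj (mem_powerset.1 hT h)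
  simp only [subset_insert_iff_of_notMem hjD, card_insert_of_notMem hjT, pow_succ]
  split_ifs <;> ring

theorem sum_neg_one_pow_card_mul_eval_eq_zero [DecidableEq ι] {P : MvPolynomial ι R}
    {J : Finset ι} (hP : P.totalDegree < #J) :
    ∑ T ∈ J.powerset, (-1 : R) ^ #T * P.eval (fun i => if i ∈ T then 1 else 0) = 0 := by
  have eval_eq (T : Finset ι) : P.eval (fun i => if i ∈ T then 1 else 0) =
      ∑ d ∈ P.support, P.coeff d * if d.support ⊆ T then 1 else 0 := by
    rw [MvPolynomial.eval_eq]
    refine sum_congr rfl fun d _ => congrArg _ ?_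
    have (i) (hi : i ∈ d.support) :
        (if i ∈ T then (1 : R) else 0) ^ d i = if i ∈ T then 1 else 0 := by
      rw [ite_pow, one_pow, zero_pow (Finsupp.mem_support_iff.1 hi)]
    rw [prod_congr rfl this, prod_ite_zero, prod_const_one]
    rfl
  simp only [eval_eq, mul_sum]
  rw [sum_comm]
  refine sum_eq_zero fun d hd => ?_
  have hdJ : ¬ J ⊆ d.support := fun h => by
    have hdeg : #d.support ≤ P.totalDegree := by
      refine le_trans ?_ (MvPolynomial.le_totalDegree hd)
      rw [card_eq_sum_ones]
      exact sum_le_sum fun i hi => Nat.one_le_iff_ne_zero.2 (Finsupp.mem_support_iff.1 hi)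
    exact absurd (card_le_card h) (by omega)
  simp only [mul_ite, mul_one, mul_zero]
  rw [← sum_filter, ← sum_mul, sum_neg_one_pow_card_of_superset hdJ, zero_mul]

theorem sum_neg_one_pow_card_of_sum_eq_zero {κ K : Type*} [Fintype κ] [Field K] [Fintype K]
    [DecidableEq K] (v : κ → ι → K) {J : Finset ι}
    (hJ : Fintype.card κ * (Fintype.card K - 1) < #J) :
    ∑ T ∈ J.powerset with ∀ k, ∑ i ∈ T, v k i = 0, (-1 : K) ^ #T = 0 := by
  classical
  let L (k : κ) : MvPolynomial ι K := ∑ i ∈ J, MvPolynomial.C (v k i) * MvPolynomial.X i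
  have totalDegree_L (k : κ) : (L k).totalDegree ≤ 1 :=
    MvPolynomial.totalDegree_finsetSum_le fun i _ =>
      (MvPolynomial.totalDegree_mul ..).trans (by simp)
  let P : MvPolynomial ι K := ∏ k, (1 - L k ^ (Fintype.card K - 1))
  have totalDegree_P : P.totalDegree ≤ Fintype.card κ * (Fintype.card K - 1) := by
    refine (MvPolynomial.totalDegree_finsetProd ..).trans ((sum_le_card_nsmul _ _ _ ?_).trans_eq
      (smul_eq_mul ..))
    intro k _
    refine (MvPolynomial.totalDegree_sub _ _).trans (max_le (by simp) ?_)
    exact (MvPolynomial.totalDegree_pow ..).trans (mul_le_of_le_one_right' (totalDegree_L k))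
  have eval_P (T) (hT : T ∈ J.powerset) : P.eval (fun i => if i ∈ T then 1 else 0) =
      if ∀ k, ∑ i ∈ T, v k i = 0 then 1 else 0 := by
    have eval_L (k : κ) : (L k).eval (fun i => if i ∈ T then 1 else 0) = ∑ i ∈ T, v k i := by
      simp [L, inter_eq_right.2 (mem_powerset.1 hT)]
    have one_sub_pow (a : K) : 1 - a ^ (Fintype.card K - 1) = if a = 0 then 1 else 0 := by
      split_ifs with ha
      · rw [ha, zero_pow (Nat.sub_ne_zero_of_lt Fintype.one_lt_card), sub_zero]
      · rw [FiniteField.pow_card_sub_one_eq_one a ha, sub_self]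
    simp [P, map_prod, eval_L, one_sub_pow, prod_ite_zero]
  refine Eq.trans ?_ (sum_neg_one_pow_card_mul_eval_eq_zero (totalDegree_P.trans_lt hJ))
  rw [sum_filter]
  refine sum_congr rfl fun T hT => ?_
  rw [eval_P T hT, mul_ite, mul_one, mul_zero]

end BooleanCube

section ZeroSumSubsets

variable {ι M : Type*} [AddCommMonoid M] [DecidableEq M] {v : ι → M} {I J T X : Finset ι} {j k : ℕ}

/-- The `k`-element subsets of `J` over which the family `v` sums to zero. Their number is the
quantity written `(k | J)` in Reiher's proof of Kemnitz' conjecture. -/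
def zeroSumSubsets (v : ι → M) (J : Finset ι) (k : ℕ) : Finset (Finset ι) :=
  {T ∈ J.powersetCard k | ∑ i ∈ T, v i = 0}

theorem mem_zeroSumSubsets : T ∈ zeroSumSubsets v J k ↔ T ⊆ J ∧ #T = k ∧ ∑ i ∈ T, v i = 0 := by
  rw [zeroSumSubsets, mem_filter, mem_powersetCard, and_assoc]

theorem zeroSumSubsets_mono (h : I ⊆ J) : zeroSumSubsets v I k ⊆ zeroSumSubsets v J k :=
  filter_subset_filter _ (powersetCard_mono h)

theorem zeroSumSubsets_eq_empty_of_subset (hIJ : I ⊆ J) (h : zeroSumSubsets v J k = ∅) :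
    zeroSumSubsets v I k = ∅ :=
  subset_empty.1 (h ▸ zeroSumSubsets_mono hIJ)

theorem card_zeroSumSubsets_zero (v : ι → M) (J : Finset ι) : #(zeroSumSubsets v J 0) = 1 := by
  simp [zeroSumSubsets, filter_singleton]

theorem card_zeroSumSubsets_map {α : Type*} (f : ι ↪ α) (v : α → M) (J : Finset ι) (k : ℕ) :
    #(zeroSumSubsets v (J.map f) k) = #(zeroSumSubsets (v ∘ f) J k) := by
  simp [zeroSumSubsets, powersetCard_map, filter_map]

theorem card_zeroSumSubsets_insert [DecidableEq ι] {z : ι} (hz : z ∉ J) (hvz : v z = 0) (k : ℕ) :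
    #(zeroSumSubsets v (insert z J) (k + 1)) =
      #(zeroSumSubsets v J (k + 1)) + #(zeroSumSubsets v J k) := by
  have notMem {n : ℕ} {T : Finset ι} (hT : T ∈ J.powersetCard n) : z ∉ T :=
    fun h => hz ((mem_powersetCard.1 hT).1 h)
  have hdisj : Disjoint (J.powersetCard (k + 1)) ((J.powersetCard k).image (insert z)) := by
    refine disjoint_left.2 fun T hT hT' => notMem hT ?_
    obtain ⟨U, -, rfl⟩ := mem_image.1 hT'
    exact mem_insert_self z U
  have hsum : ∀ T ∈ J.powersetCard k, ∑ i ∈ insert z T, v i = 0 ↔ ∑ i ∈ T, v i = 0 :=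
    fun T hT => by rw [sum_insert (notMem hT), hvz, zero_add]
  have hinj : Set.InjOn (insert z) (zeroSumSubsets v J k : Set (Finset ι)) :=
    insert_erase_invOn.2.injOn.mono fun T hT => notMem (mem_of_mem_filter T hT)
  simp only [zeroSumSubsets] at hinj ⊢
  rw [powersetCard_succ_insert hz, filter_union, card_union_of_disjoint
    (disjoint_filter_filter hdisj), filter_image, filter_congr hsum, card_image_of_injOn hinj]

theorem filter_subset_zeroSumSubsets [DecidableEq ι] (h : I ⊆ J) :
    {T ∈ zeroSumSubsets v J k | T ⊆ I} = zeroSumSubsets v I k := by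
  ext T
  simp only [mem_filter, mem_zeroSumSubsets]
  exact ⟨fun hT => ⟨hT.2, hT.1.2⟩, fun hT => ⟨⟨hT.1.trans h, hT.2⟩, hT.1⟩⟩

theorem sdiff_mem_zeroSumSubsets [DecidableEq ι] (hX : X ∈ zeroSumSubsets v J (j + k))
    (hT : T ∈ zeroSumSubsets v X j) : X \ T ∈ zeroSumSubsets v (J \ T) k := by
  obtain ⟨hXJ, hXcard, hXsum⟩ := mem_zeroSumSubsets.1 hX
  obtain ⟨hTX, hTcard, hTsum⟩ := mem_zeroSumSubsets.1 hT
  refine mem_zeroSumSubsets.2 ⟨sdiff_subset_sdiff hXJ le_rfl, ?_, ?_⟩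
  · rw [card_sdiff_of_subset hTX, hXcard, hTcard, Nat.add_sub_cancel_left]
  · rw [← hXsum, ← sum_sdiff hTX, hTsum, add_zero]

theorem union_mem_zeroSumSubsets [DecidableEq ι] (hT : T ∈ zeroSumSubsets v J j)
    (hX : X ∈ zeroSumSubsets v (J \ T) k) : T ∪ X ∈ zeroSumSubsets v J (j + k) := by
  obtain ⟨hTJ, hTcard, hTsum⟩ := mem_zeroSumSubsets.1 hT
  obtain ⟨hXJ, hXcard, hXsum⟩ := mem_zeroSumSubsets.1 hX
  have hdisj : Disjoint T X := disjoint_sdiff.mono_right hXJ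
  refine mem_zeroSumSubsets.2 ⟨union_subset hTJ (hXJ.trans sdiff_subset), ?_, ?_⟩
  · rw [card_union_of_disjoint hdisj, hTcard, hXcard]
  · rw [sum_union hdisj, hTsum, hXsum, add_zero]

theorem card_zeroSumSubsets_comm (hX : ∑ i ∈ X, v i = 0) (hcard : #X = j + k) :
    #(zeroSumSubsets v X j) = #(zeroSumSubsets v X k) := by
  classical
  have sdiff_mem {j k : ℕ} (hcard : #X = j + k) {T : Finset ι} (hT : T ∈ zeroSumSubsets v X j) :
      X \ T ∈ zeroSumSubsets v X k :=
    zeroSumSubsets_mono sdiff_subset <|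
      sdiff_mem_zeroSumSubsets (mem_zeroSumSubsets.2 ⟨Subset.rfl, hcard, hX⟩) hT
  have sdiff_sdiff {j : ℕ} {T : Finset ι} (hT : T ∈ zeroSumSubsets v X j) : X \ (X \ T) = T :=
    Finset.sdiff_sdiff_eq_self (mem_zeroSumSubsets.1 hT).1
  exact card_bij' (fun T _ => X \ T) (fun T _ => X \ T) (fun _ => sdiff_mem hcard)
    (fun _ => sdiff_mem (hcard.trans (add_comm j k))) (fun _ => sdiff_sdiff) (fun _ => sdiff_sdiff)

theorem card_filter_superset_zeroSumSubsets [DecidableEq ι] (hT : T ∈ zeroSumSubsets v J j)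
    (k : ℕ) :
    #{X ∈ zeroSumSubsets v J (j + k) | T ⊆ X} = #(zeroSumSubsets v (J \ T) k) := by
  have ⟨_, hTcard, hTsum⟩ := mem_zeroSumSubsets.1 hT
  refine card_bij' (fun X _ => X \ T) (fun X _ => T ∪ X) ?_ ?_ ?_ ?_
  · intro X hX
    obtain ⟨hX, hTX⟩ := mem_filter.1 hX
    exact sdiff_mem_zeroSumSubsets hX (mem_zeroSumSubsets.2 ⟨hTX, hTcard, hTsum⟩)
  · exact fun X hX => mem_filter.2 ⟨union_mem_zeroSumSubsets hT hX, subset_union_left⟩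
  · exact fun X hX => union_sdiff_of_subset (mem_filter.1 hX).2
  · exact fun X hX => union_sdiff_cancel_left
      (disjoint_sdiff.mono_right (mem_zeroSumSubsets.1 hX).1)

theorem sum_card_zeroSumSubsets_sdiff [DecidableEq ι] (v : ι → M) (J : Finset ι) (j k : ℕ) :
    ∑ T ∈ zeroSumSubsets v J j, #(zeroSumSubsets v (J \ T) k) =
      ∑ X ∈ zeroSumSubsets v J (j + k), #(zeroSumSubsets v X j) :=
  calc ∑ T ∈ zeroSumSubsets v J j, #(zeroSumSubsets v (J \ T) k)
    _ = ∑ T ∈ zeroSumSubsets v J j, #{X ∈ zeroSumSubsets v J (j + k) | T ⊆ X} :=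
      sum_congr rfl fun _ hT => (card_filter_superset_zeroSumSubsets hT k).symm
    _ = ∑ X ∈ zeroSumSubsets v J (j + k), #{T ∈ zeroSumSubsets v J j | T ⊆ X} :=
      sum_card_bipartiteAbove_eq_sum_card_bipartiteBelow _
    _ = ∑ X ∈ zeroSumSubsets v J (j + k), #(zeroSumSubsets v X j) :=
      sum_congr rfl fun _ hX => by rw [filter_subset_zeroSumSubsets (mem_zeroSumSubsets.1 hX).1]

theorem sum_card_zeroSumSubsets_powersetCard (v : ι → M) (J : Finset ι) {k m : ℕ} (hkm : k ≤ m) :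
    ∑ I ∈ J.powersetCard m, #(zeroSumSubsets v I k) =
      (#J - k).choose (m - k) * #(zeroSumSubsets v J k) := by
  classical
  calc ∑ I ∈ J.powersetCard m, #(zeroSumSubsets v I k)
    _ = ∑ I ∈ J.powersetCard m, #{T ∈ zeroSumSubsets v J k | T ⊆ I} :=
      sum_congr rfl fun _ hI => by rw [filter_subset_zeroSumSubsets (mem_powersetCard.1 hI).1]
    _ = ∑ T ∈ zeroSumSubsets v J k, #{I ∈ J.powersetCard m | T ⊆ I} :=
      (sum_card_bipartiteAbove_eq_sum_card_bipartiteBelow _).symm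
    _ = ∑ _ ∈ zeroSumSubsets v J k, (#J - k).choose (m - k) := sum_congr rfl fun _ hT => by
      obtain ⟨hTJ, rfl, -⟩ := mem_zeroSumSubsets.1 hT
      exact card_filter_powersetCard_subset _ J m hTJ hkm
    _ = (#J - k).choose (m - k) * #(zeroSumSubsets v J k) := by
      rw [sum_const, smul_eq_mul, mul_comm]

end ZeroSumSubsets

section Kemnitz

variable {ι : Type*} {p : ℕ} [Fact p.Prime] {v : ι → ZMod p × ZMod p} {I J : Finset ι}

theorem sum_neg_one_pow_card_of_dvd_card_of_sum_eq_zero (hJ : 3 * p - 2 ≤ #J) :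
    ∑ T ∈ J.powerset with p ∣ #T ∧ ∑ i ∈ T, v i = 0, (-1 : ZMod p) ^ #T = 0 := by
  have hp : p.Prime := Fact.out
  let w : Fin 3 → ι → ZMod p := ![fun _ => 1, fun i => (v i).1, fun i => (v i).2]
  have sum_w_eq_zero (T : Finset ι) :
      (∀ k, ∑ i ∈ T, w k i = 0) ↔ p ∣ #T ∧ ∑ i ∈ T, v i = 0 := by
    simp [w, Fin.forall_fin_succ, Prod.ext_iff, Prod.fst_sum, Prod.snd_sum,
      CharP.cast_eq_zero_iff (ZMod p) p]
  have hlt : Fintype.card (Fin 3) * (Fintype.card (ZMod p) - 1) < #J := by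
    rw [Fintype.card_fin, ZMod.card]
    have := hp.pos
    omega
  simpa only [sum_w_eq_zero] using sum_neg_one_pow_card_of_sum_eq_zero w hlt

theorem alternating_sum_card_zeroSumSubsets {n : ℕ} (hJ : 3 * p - 2 ≤ #J) (hn : #J < n * p) :
    ∑ c ∈ range n, (-1 : ZMod p) ^ c * #(zeroSumSubsets v J (c * p)) = 0 := by
  have hp : 0 < p := (Fact.out : p.Prime).pos
  refine Eq.trans ?_ (sum_neg_one_pow_card_of_dvd_card_of_sum_eq_zero (v := v) hJ)
  have card_div_mem : ∀ T ∈ {T ∈ J.powerset | p ∣ #T ∧ ∑ i ∈ T, v i = 0}, #T / p ∈ range n :=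
    fun T hT => mem_range.2 <| Nat.div_lt_of_lt_mul <| mul_comm n p ▸
      (card_le_card (mem_powerset.1 (mem_filter.1 hT).1)).trans_lt hn
  rw [← sum_fiberwise_of_maps_to card_div_mem]
  refine sum_congr rfl fun c _ => ?_
  have fiber_eq : {T ∈ {T ∈ J.powerset | p ∣ #T ∧ ∑ i ∈ T, v i = 0} | #T / p = c} =
      zeroSumSubsets v J (c * p) := by
    ext T
    simp only [mem_filter, mem_powerset, mem_zeroSumSubsets]
    constructor
    · rintro ⟨⟨hTJ, hdvd, hsum⟩, rfl⟩
      exact ⟨hTJ, (Nat.div_mul_cancel hdvd).symm, hsum⟩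
    · rintro ⟨hTJ, hcard, hsum⟩
      exact ⟨⟨hTJ, hcard ▸ dvd_mul_left p c, hsum⟩, hcard ▸ Nat.mul_div_cancel c hp⟩
  have sign_eq : ∀ T ∈ zeroSumSubsets v J (c * p), (-1 : ZMod p) ^ #T = (-1) ^ c := fun T hT => by
    rw [(mem_zeroSumSubsets.1 hT).2.1, mul_comm, pow_mul, neg_one_pow_char]
  rw [fiber_eq, sum_congr rfl sign_eq, sum_const, nsmul_eq_mul, mul_comm]

theorem alternating_sum_card_zeroSumSubsets_add {n : ℕ} (hJ : 3 * p - 3 ≤ #J)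
    (hn : #J + 1 < (n + 1) * p) :
    1 + ∑ c ∈ range n, (-1 : ZMod p) ^ (c + 1) *
      (#(zeroSumSubsets v J ((c + 1) * p)) + #(zeroSumSubsets v J ((c + 1) * p - 1))) = 0 := by
  classical
  -- Adjoining an index with value `0` turns `(cp | J)` into `(cp | J) + (cp - 1 | J)`.
  let w : Option ι → ZMod p × ZMod p := fun o => o.elim 0 v
  let K : Finset (Option ι) := J.map .some
  have hnone : none ∉ K := by simp [K]
  have hcard : #(insert none K) = #J + 1 := by rw [card_insert_of_notMem hnone, card_map]
  have card_insert_none (c : ℕ) : #(zeroSumSubsets w (insert none K) ((c + 1) * p)) =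
      #(zeroSumSubsets v J ((c + 1) * p)) + #(zeroSumSubsets v J ((c + 1) * p - 1)) := by
    have hpos : 1 ≤ (c + 1) * p := Nat.mul_pos c.succ_pos (Fact.out : p.Prime).pos
    obtain ⟨k, hk⟩ := Nat.exists_eq_add_of_le' hpos
    rw [hk, Nat.add_sub_cancel, card_zeroSumSubsets_insert hnone rfl]
    simp only [K, card_zeroSumSubsets_map]
    rfl
  have h := alternating_sum_card_zeroSumSubsets (v := w) (J := insert none K) (n := n + 1)
    (by omega) (by omega)
  rw [sum_range_succ', zero_mul, card_zeroSumSubsets_zero, add_comm] at h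
  simpa only [pow_zero, Nat.cast_one, one_mul, card_insert_none, Nat.cast_add] using h

theorem card_zeroSumSubsets_two_mul_eq_neg_one (h : zeroSumSubsets v J p = ∅) (hIJ : I ⊆ J)
    (hI : 3 * p - 2 ≤ #I) (hI' : #I < 3 * p) : (#(zeroSumSubsets v I (2 * p)) : ZMod p) = -1 := by
  have hp : zeroSumSubsets v I p = ∅ := zeroSumSubsets_eq_empty_of_subset hIJ h
  have hsum := alternating_sum_card_zeroSumSubsets (v := v) hI hI'
  simp only [sum_range_succ, sum_range_zero, zero_mul, one_mul, card_zeroSumSubsets_zero, hp,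
    card_empty] at hsum
  push_cast at hsum
  linear_combination hsum

theorem zeroSumSubsets_three_mul_eq_empty (h : zeroSumSubsets v J p = ∅) :
    zeroSumSubsets v J (3 * p) = ∅ := by
  classical
  have hp : 0 < p := (Fact.out : p.Prime).pos
  refine eq_empty_of_forall_notMem fun X hX => ?_
  obtain ⟨hXJ, hXcard, hXsum⟩ := mem_zeroSumSubsets.1 hX
  obtain ⟨x, hx⟩ : X.Nonempty := card_pos.1 (by omega)
  have hcard_erase := card_erase_of_mem hx
  have hne : (#(zeroSumSubsets v (X.erase x) (2 * p)) : ZMod p) ≠ 0 := by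
    rw [card_zeroSumSubsets_two_mul_eq_neg_one h ((erase_subset x X).trans hXJ) (by omega)
      (by omega)]
    exact neg_ne_zero.2 one_ne_zero
  have hXp : #(zeroSumSubsets v X p) = 0 :=
    card_eq_zero.2 (zeroSumSubsets_eq_empty_of_subset hXJ h)
  rw [card_zeroSumSubsets_comm hXsum (show #X = p + 2 * p by omega), card_eq_zero] at hXp
  rw [zeroSumSubsets_eq_empty_of_subset (erase_subset x X) hXp, card_empty, Nat.cast_zero] at hne
  exact hne rfl

theorem card_zeroSumSubsets_sub_one_eq (h : zeroSumSubsets v J p = ∅) (hJ : #J = 4 * p - 3) :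
    (#(zeroSumSubsets v J (p - 1)) : ZMod p) = #(zeroSumSubsets v J (3 * p - 1)) := by
  classical
  have hp : 2 ≤ p := (Fact.out : p.Prime).two_le
  have sdiff_eq : ∀ T ∈ zeroSumSubsets v J (p - 1),
      (#(zeroSumSubsets v (J \ T) (2 * p)) : ZMod p) = -1 := fun T hT => by
    obtain ⟨hTJ, hTcard, -⟩ := mem_zeroSumSubsets.1 hT
    have hcard := card_sdiff_of_subset hTJ
    exact card_zeroSumSubsets_two_mul_eq_neg_one h sdiff_subset (by omega) (by omega)
  have subset_eq : ∀ X ∈ zeroSumSubsets v J (p - 1 + 2 * p),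
      (#(zeroSumSubsets v X (p - 1)) : ZMod p) = -1 := fun X hX => by
    obtain ⟨hXJ, hXcard, hXsum⟩ := mem_zeroSumSubsets.1 hX
    rw [card_zeroSumSubsets_comm hXsum hXcard]
    exact card_zeroSumSubsets_two_mul_eq_neg_one h hXJ (by omega) (by omega)
  have hcount := congrArg (Nat.cast : ℕ → ZMod p)
    (sum_card_zeroSumSubsets_sdiff v J (p - 1) (2 * p))
  rw [Nat.cast_sum, Nat.cast_sum, sum_congr rfl sdiff_eq, sum_congr rfl subset_eq, sum_const,
    sum_const, nsmul_eq_mul, nsmul_eq_mul, mul_neg_one, mul_neg_one, neg_inj] at hcount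
  rwa [show 3 * p - 1 = p - 1 + 2 * p by omega]

theorem cast_choose_add_self_right (n : ℕ) :
    ((n + p).choose p : ZMod p) = (n / p + 1 : ℕ) := by
  have hp : 0 < p := (Fact.out : p.Prime).pos
  have hlucas := Choose.choose_modEq_choose_mod_mul_choose_div_nat (n := n + p) (k := p) (p := p)
  rw [Nat.mod_self, Nat.div_self hp, Nat.choose_zero_right, Nat.choose_one_right, one_mul,
    Nat.add_div_right n hp] at hlucas
  exact (ZMod.natCast_eq_natCast_iff _ _ _).2 hlucas

theorem cast_sum_card_zeroSumSubsets_powersetCard {k m : ℕ} (hkm : k ≤ m) (hJ : #J = m + p) :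
    (∑ I ∈ J.powersetCard m, #(zeroSumSubsets v I k) : ZMod p) =
      ((m - k) / p + 1 : ℕ) * #(zeroSumSubsets v J k) := by
  rw [← Nat.cast_sum, sum_card_zeroSumSubsets_powersetCard v J hkm, Nat.cast_mul, hJ,
    Nat.sub_add_comm hkm, Nat.choose_symm_add, cast_choose_add_self_right]

theorem averaged_alternating_sum_card_zeroSumSubsets (hp2 : p ≠ 2) (hJ : #J = 4 * p - 3) :
    3 - 2 * (#(zeroSumSubsets v J p) + #(zeroSumSubsets v J (p - 1)) : ZMod p) +
      (#(zeroSumSubsets v J (2 * p)) + #(zeroSumSubsets v J (2 * p - 1))) = 0 := by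
  have hp : 2 ≤ p := (Fact.out : p.Prime).two_le
  have average {k c : ℕ} (hk : k ≤ 3 * p - 3) (hc : c * p ≤ 3 * p - 3 - k)
      (hc' : 3 * p - 3 - k < (c + 1) * p) :
      (∑ I ∈ J.powersetCard (3 * p - 3), #(zeroSumSubsets v I k) : ZMod p) =
        (c + 1 : ℕ) * #(zeroSumSubsets v J k) := by
    rw [cast_sum_card_zeroSumSubsets_powersetCard hk (by omega), Nat.div_eq_of_lt_le hc hc']
  have hsum : ∑ I ∈ J.powersetCard (3 * p - 3), ((#(zeroSumSubsets v I 0) : ZMod p) -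
      (#(zeroSumSubsets v I p) + #(zeroSumSubsets v I (p - 1))) +
      (#(zeroSumSubsets v I (2 * p)) + #(zeroSumSubsets v I (2 * p - 1)))) = 0 := by
    refine sum_eq_zero fun I hI => ?_
    obtain ⟨-, hI⟩ := mem_powersetCard.1 hI
    have h := alternating_sum_card_zeroSumSubsets_add (v := v) (J := I) (n := 2) (by omega)
      (by omega)
    simp only [sum_range_succ, sum_range_zero, zero_add, one_mul, Nat.reduceAdd] at h
    rw [card_zeroSumSubsets_zero, Nat.cast_one]
    linear_combination h
  rw [sum_add_distrib, sum_sub_distrib, sum_add_distrib, sum_add_distrib,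
    average (k := 0) (c := 2) (by omega) (by omega) (by omega),
    average (k := p) (c := 1) (by omega) (by omega) (by omega),
    average (k := p - 1) (c := 1) (by omega) (by omega) (by omega),
    average (k := 2 * p) (c := 0) (by omega) (by omega) (by omega),
    average (k := 2 * p - 1) (c := 0) (by omega) (by omega) (by omega),
    card_zeroSumSubsets_zero] at hsum
  push_cast at hsum
  linear_combination hsum

theorem zeroSumSubsets_prime_nonempty (hp2 : p ≠ 2) (hJ : #J = 4 * p - 3) :
    (zeroSumSubsets v J p).Nonempty := by
  by_contra hne
  have hempty : zeroSumSubsets v J p = ∅ := not_nonempty_iff_eq_empty.1 hne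
  have hp : p.Prime := Fact.out
  have hp_two := hp.two_le
  have hadd := alternating_sum_card_zeroSumSubsets_add (v := v) (J := J) (n := 3) (by omega)
    (by omega)
  have haverage := averaged_alternating_sum_card_zeroSumSubsets (v := v) hp2 hJ
  have hswap := card_zeroSumSubsets_sub_one_eq hempty hJ
  simp only [sum_range_succ, sum_range_zero, zero_add, one_mul, Nat.reduceAdd, hempty,
    zeroSumSubsets_three_mul_eq_empty hempty, card_empty, Nat.cast_zero] at hadd haverage
  have htwo : ((2 : ℕ) : ZMod p) = 0 := by
    push_cast
    linear_combination haverage - hadd + hswap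
  exact hp2 ((Nat.prime_dvd_prime_iff_eq hp Nat.prime_two).1
    ((CharP.cast_eq_zero_iff (ZMod p) p 2).1 htwo))

theorem exists_pair_sum_eq_zero {v : ι → ZMod 2 × ZMod 2} (hJ : 4 < #J) :
    ∃ T ⊆ J, #T = 2 ∧ ∑ i ∈ T, v i = 0 := by
  classical
  obtain ⟨i, hi, j, hj, hij, heq⟩ := exists_ne_map_eq_of_card_lt_of_maps_to (s := J)
    (t := (univ : Finset (ZMod 2 × ZMod 2))) (f := v) hJ (fun _ _ => mem_univ _)
  refine ⟨{i, j}, insert_subset hi (singleton_subset_iff.2 hj), card_pair hij, ?_⟩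
  rw [sum_pair hij, heq]
  exact Prod.ext (CharTwo.add_self_eq_zero _) (CharTwo.add_self_eq_zero _)

theorem kemnitz_prime (v : ι → ZMod p × ZMod p) (hJ : 4 * p - 3 ≤ #J) :
    ∃ T ⊆ J, #T = p ∧ ∑ i ∈ T, v i = 0 := by
  rcases eq_or_ne p 2 with rfl | hp2
  · exact exists_pair_sum_eq_zero hJ
  · obtain ⟨K, hKJ, hK⟩ := exists_subset_card_eq hJ
    obtain ⟨T, hT⟩ := zeroSumSubsets_prime_nonempty (v := v) hp2 hK
    exact ⟨T, mem_zeroSumSubsets.1 (zeroSumSubsets_mono hKJ hT)⟩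

end Kemnitz

section Sequences

open scoped List

theorem exists_subperm_map_eq {α β : Type*} {f : α → β} {l : List β} {L : List α}
    (h : l <+~ L.map f) : ∃ L', L' <+~ L ∧ L'.map f = l := by
  obtain ⟨_, hperm, hsub⟩ := h
  obtain ⟨L₁, hL₁, rfl⟩ := List.sublist_map_iff.1 hsub
  obtain ⟨L', rfl, hL'⟩ := (List.eq_map_comp_perm f).symm.le l L₁ hperm.symm
  exact ⟨L', hL'.subperm.trans hL₁.subperm, rfl⟩

theorem exists_list_of_exists_subset_toEnumFinset {α A : Type*} [DecidableEq α] [AddCommMonoid A]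
    {S : Multiset α} {f : α → A} {k : ℕ}
    (h : ∃ t ⊆ S.toEnumFinset, #t = k ∧ ∑ i ∈ t, f i.1 = 0) :
    ∃ l : List α, (l : Multiset α) ≤ S ∧ l.length = k ∧ (l.map f).sum = 0 := by
  obtain ⟨t, ht, hcard, hsum⟩ := h
  refine ⟨(t.1.map Prod.fst).toList, ?_, by simpa using hcard, ?_⟩
  · rw [Multiset.coe_toList]
    exact Multiset.map_fst_le_of_subset_toEnumFinset ht
  · rw [← Multiset.sum_coe, ← Multiset.map_coe, Multiset.coe_toList, Multiset.map_map]
    exact hsum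

variable {M : Type*} [Monoid M]

/-- Every sequence of at least `c` terms from `P` has a subsequence of length `k` whose terms can
be ordered so that their product lies in `Q`. -/
def ForcesProductIn (P Q : Set M) (k c : ℕ) : Prop :=
  ∀ S : Multiset M, (∀ g ∈ S, g ∈ P) → c ≤ Multiset.card S →
    ∃ l : List M, (l : Multiset M) ≤ S ∧ l.length = k ∧ l.prod ∈ Q

variable {P Q R : Set M} {k k' c c' : ℕ}

theorem ForcesProductIn.exists_blocks (h : ForcesProductIn P Q k c) (b : ℕ) {S : Multiset M}
    (hSP : ∀ g ∈ S, g ∈ P) (hS : b * k + c ≤ Multiset.card S + k) :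
    ∃ L : List (List M), L.length = b ∧ (∀ l ∈ L, l.length = k ∧ l.prod ∈ Q) ∧
      (L.flatten : Multiset M) ≤ S := by
  classical
  induction b generalizing S with
  | zero => exact ⟨[], rfl, by simp, zero_le⟩
  | succ b ih =>
    rw [Nat.succ_mul] at hS
    obtain ⟨l, hlS, hlk, hlQ⟩ := h S hSP (by omega)
    have hcard := Multiset.card_sub hlS
    rw [Multiset.coe_card] at hcard
    obtain ⟨L, hLb, hL, hLS⟩ := ih (S := S - l)
      (fun g hg => hSP g (Multiset.mem_of_le tsub_le_self hg)) (by omega)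
    refine ⟨l :: L, by rw [List.length_cons, hLb], List.forall_mem_cons.2 ⟨⟨hlk, hlQ⟩, hL⟩, ?_⟩
    rw [List.flatten_cons, ← Multiset.coe_add, add_comm]
    exact (add_le_add_left hLS _).trans_eq (tsub_add_cancel_of_le hlS)

theorem ForcesProductIn.trans (hPQ : ForcesProductIn P Q k c) (hQR : ForcesProductIn Q R k' c') :
    ForcesProductIn P R (k' * k) ((c' - 1) * k + c) := by
  intro S hSP hS
  obtain ⟨L, hLc', hL, hLS⟩ := hPQ.exists_blocks c' hSP <| by
    have : c' * k ≤ (c' - 1) * k + k := by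
      rw [← Nat.succ_mul]
      exact Nat.mul_le_mul_right k (by omega)
    omega
  obtain ⟨l, hlL, hlk', hlR⟩ := hQR (L.map List.prod)
    (by simpa using fun l hl => (hL l hl).2) (by simp [hLc'])
  obtain ⟨L', hL'L, rfl⟩ := exists_subperm_map_eq (Multiset.coe_le.1 hlL)
  have hlength : ∀ l ∈ L', l.length = k := fun l hl => (hL l (hL'L.subset hl)).1
  refine ⟨L'.flatten, le_trans ?_ hLS, ?_, by rwa [List.prod_flatten]⟩
  · obtain ⟨L₁, hperm, hsub⟩ := hL'L
    exact Multiset.coe_le.2 ⟨L₁.flatten, hperm.flatten, hsub.flatten⟩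
  · rw [List.length_flatten, List.map_congr_left hlength, List.map_const', List.sum_replicate,
      smul_eq_mul, ← hlk', List.length_map]

end Sequences

section Metacyclic

open Submonoid (powers)
open scoped Pointwise

variable {M : Type*} [Monoid M] {x y : M} {r : ℕ}

theorem semiconjBy_pow_left (h : SemiconjBy y x (x ^ r)) (b : ℕ) :
    SemiconjBy (y ^ b) x (x ^ r ^ b) := by
  induction b with
  | zero => simp
  | succ b ih =>
    rw [pow_succ', pow_succ', pow_mul]
    exact (h.pow_right (r ^ b)).mul_left ih

theorem mem_powers_mul_powers {g : M} :
    g ∈ (powers x * powers y : Set M) ↔ ∃ a b : ℕ, x ^ a * y ^ b = g := by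
  simp [Set.mem_mul, Submonoid.mem_powers_iff]

theorem exists_prod_eq_pow_mul_pow {p : ℕ} (h : SemiconjBy y x (x ^ r)) (hr : (r : ZMod p) = 1)
    {a b : M → ℕ} {l : List M} (hl : ∀ g ∈ l, x ^ a g * y ^ b g = g) :
    ∃ A : ℕ, (A : ZMod p) = (l.map fun g => (a g : ZMod p)).sum ∧
      l.prod = x ^ A * y ^ (l.map b).sum := by
  induction l with
  | nil => exact ⟨0, by simp⟩
  | cons g l ih =>
    obtain ⟨hg, hl⟩ := List.forall_mem_cons.1 hl
    obtain ⟨A, hA, hprod⟩ := ih hl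
    refine ⟨a g + r ^ b g * A, by simp [hr, hA], ?_⟩
    have hcomm : y ^ b g * x ^ A = x ^ (r ^ b g * A) * y ^ b g := by
      rw [pow_mul]
      exact ((semiconjBy_pow_left h (b g)).pow_right A).eq
    calc (g :: l).prod
      _ = x ^ a g * y ^ b g * (x ^ A * y ^ (l.map b).sum) := by rw [List.prod_cons, hprod, hg]
      _ = x ^ a g * (y ^ b g * x ^ A) * y ^ (l.map b).sum := by simp only [mul_assoc]
      _ = x ^ (a g + r ^ b g * A) * y ^ ((g :: l).map b).sum := by
        rw [hcomm, List.map_cons, List.sum_cons, pow_add, pow_add]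
        simp only [mul_assoc]

theorem forcesProductIn_powers_mul_powers {p : ℕ} [Fact p.Prime] (h : SemiconjBy y x (x ^ r))
    (hr : (r : ZMod p) = 1) :
    ForcesProductIn (powers x * powers y : Set M) (powers (x ^ p) * powers (y ^ p) : Set M)
      p (4 * p - 3) := by
  classical
  intro S hSP hS
  choose! a b hab using fun g hg => mem_powers_mul_powers.1 (hSP g hg)
  let f (g : M) : ZMod p × ZMod p := (a g, b g)
  obtain ⟨l, hlS, hlp, hsum⟩ := exists_list_of_exists_subset_toEnumFinset (f := f) <|
    kemnitz_prime (fun i => f i.1) (hS.trans_eq (Multiset.card_toEnumFinset S).symm)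
  obtain ⟨A, hA, hprod⟩ :=
    exists_prod_eq_pow_mul_pow h hr fun g hg => hab g (Multiset.mem_of_le hlS hg)
  have hpA : p ∣ A := by
    rw [← CharP.cast_eq_zero_iff (ZMod p), hA]
    have := congrArg (AddMonoidHom.fst _ _) hsum
    rwa [map_list_sum, List.map_map] at this
  have hpB : p ∣ (l.map b).sum := by
    rw [← CharP.cast_eq_zero_iff (ZMod p), Nat.cast_list_sum, List.map_map]
    have := congrArg (AddMonoidHom.snd _ _) hsum
    rwa [map_list_sum, List.map_map] at this
  obtain ⟨A, rfl⟩ := hpA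
  obtain ⟨B, hB⟩ := hpB
  rw [hB, pow_mul, pow_mul] at hprod
  exact ⟨l, hlS, hlp, mem_powers_mul_powers.2 ⟨A, B, hprod.symm⟩⟩

theorem forcesProductIn_powers_one {n : ℕ} (hx : x ^ n = 1) :
    ForcesProductIn (powers x : Set M) {1} n (2 * n - 1) := by
  classical
  intro S hSP hS
  choose! a ha using hSP
  obtain ⟨l, hlS, hln, hsum⟩ :=
    exists_list_of_exists_subset_toEnumFinset (f := fun g => (a g : ZMod n)) <|
      ZMod.erdos_ginzburg_ziv (fun i => (a i.1 : ZMod n))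
        (hS.trans_eq (Multiset.card_toEnumFinset S).symm)
  obtain ⟨A, hA, hprod⟩ := exists_prod_eq_pow_mul_pow (x := x) (y := 1) (r := 1) (p := n)
    (a := a) (b := 0) (l := l) (by simp) Nat.cast_one
    fun g hg => by simpa using ha g (Multiset.mem_of_le hlS hg)
  obtain ⟨k, rfl⟩ : n ∣ A := by rw [← CharP.cast_eq_zero_iff (ZMod n), hA, hsum]
  refine ⟨l, hlS, hln, ?_⟩
  rw [hprod, pow_mul, hx, one_pow, one_pow, one_mul, Set.mem_singleton_iff]

theorem eq_one_of_pow_eq_one_zmod_minFac {m : ℕ} (hm : 1 < m) {a : ZMod m.minFac}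
    (ha : a ^ m = 1) : a = 1 := by
  have hp : m.minFac.Prime := Nat.minFac_prime hm.ne'
  have : Fact m.minFac.Prime := ⟨hp⟩
  have ha0 : a ≠ 0 := by
    rintro rfl
    exact zero_ne_one ((zero_pow (by omega)).symm.trans ha)
  have hcoprime : m.Coprime (m.minFac - 1) :=
    Nat.coprime_of_lt_minFac (Nat.sub_ne_zero_of_lt hp.one_lt) (Nat.sub_lt hp.pos one_pos)
  rw [← pow_one a, ← hcoprime, pow_gcd_eq_one]
  exact ⟨ha, ZMod.pow_card_sub_one_eq_one ha0⟩

theorem forcesProductIn_one {m n : ℕ} (hm : 0 < m) (hn : 0 < n) (hx : x ^ (m * n) = 1)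
    (hy : y ^ m = 1) (h : SemiconjBy y x (x ^ r)) (hr : r ^ m ≡ 1 [MOD m]) :
    ForcesProductIn (powers x * powers y : Set M) {1} (m * n) (2 * m + 2 * (m * n) - 3) := by
  induction m using Nat.strong_induction_on generalizing x y r with
  | _ m ih =>
    obtain rfl | hm1 : m = 1 ∨ 1 < m := by omega
    · rw [pow_one] at hy
      rw [one_mul] at hx
      rw [one_mul, show 2 * 1 + 2 * n - 3 = 2 * n - 1 by omega]
      simpa [hy] using forcesProductIn_powers_one hx
    · have hp : m.minFac.Prime := Nat.minFac_prime hm1.ne'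
      have hr1 : (r : ZMod m.minFac) = 1 := eq_one_of_pow_eq_one_zmod_minFac hm1 <|
        mod_cast (ZMod.natCast_eq_natCast_iff _ _ _).2 (hr.of_dvd (Nat.minFac_dvd m))
      obtain ⟨k, hk⟩ := Nat.minFac_dvd m
      generalize m.minFac = p at hp hr1 hk
      subst hk
      have : Fact p.Prime := ⟨hp⟩
      have hk0 : 0 < k := Nat.pos_of_mul_pos_left hm
      have hyx : SemiconjBy (y ^ p) (x ^ p) ((x ^ p) ^ r ^ p) := by
        rw [pow_right_comm]
        exact (semiconjBy_pow_left h p).pow_right p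
      have hinduct := ih k (lt_mul_left hk0 hp.one_lt) hk0 (by rwa [← pow_mul, ← mul_assoc])
        (by rwa [← pow_mul]) hyx (by rw [← pow_mul]; exact hr.of_dvd (dvd_mul_left k p))
      convert (forcesProductIn_powers_mul_powers h hr1).trans hinduct using 1
      · ring
      · have hkn : 0 < k * n := Nat.mul_pos hk0 hn
        obtain ⟨w, hw⟩ : ∃ w, k + k * n = w + 2 := Nat.exists_eq_add_of_le' (by omega)
        have hlength : p * k + p * k * n = w * p + 2 * p := by linear_combination p * hw
        have hpred : (2 * k + 2 * (k * n) - 3 - 1) * p = 2 * (w * p) := by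
          rw [show 2 * k + 2 * (k * n) - 3 - 1 = 2 * w by omega, mul_assoc]
        have := hp.pos
        omega

theorem pow_modEq_one_of_semiconjBy {G : Type*} [Group G] {m : ℕ} {x y : G}
    (h : SemiconjBy y x (x ^ r)) (hy : y ^ m = 1) : r ^ m ≡ 1 [MOD orderOf x] := by
  have hpow := semiconjBy_pow_left h m
  rw [hy, SemiconjBy, one_mul, mul_one] at hpow
  rw [← pow_eq_pow_iff_modEq, ← hpow, pow_one]

theorem product_one_subseq_eq_mn_general {G : Type*} [Group G] {m n r : ℕ} (hm : 0 < m)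
    (hn : 0 < n) {x y : G} (hx : x ^ (m * n) = 1) (hy : y ^ m = 1)
    (hyx : SemiconjBy y x (x ^ r)) (hr : r ^ m ≡ 1 [MOD m]) (S : Multiset G)
    (hSG : ∀ g ∈ S, g ∈ (powers x * powers y : Set G))
    (hS : 2 * m + 2 * (m * n) - 3 ≤ Multiset.card S) :
    ∃ T ≤ S, Multiset.card T = m * n ∧ IsProductOne T := by
  obtain ⟨l, hlS, hlength, hprod⟩ := forcesProductIn_one hm hn hx hy hyx hr S hSG hS
  exact ⟨l, hlS, hlength, l, rfl, hprod⟩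

end Metacyclic

section SemidirectProduct

open Submonoid (powers)
open SemidirectProduct
open scoped Pointwise

variable {N H : Type*} [Group N] [Group H] {φ : H →* MulAut N}

theorem semiconjBy_inr_inl (b : H) (a : N) :
    SemiconjBy (inr b : N ⋊[φ] H) (inl a) (inl (φ b a)) := by
  rw [inl_aut, map_inv]
  exact SemiconjBy.conj_mk (inr b) (inl a)

theorem mem_powers_inl_mul_powers_inr {u : N} {w : H} (hu : ∀ a, a ∈ powers u)
    (hw : ∀ b, b ∈ powers w) (g : N ⋊[φ] H) :
    g ∈ (powers (inl u : N ⋊[φ] H) * powers (inr w : N ⋊[φ] H) : Set (N ⋊[φ] H)) := by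
  obtain ⟨a, ha⟩ := Submonoid.mem_powers_iff _ _ |>.1 (hu g.left)
  obtain ⟨b, hb⟩ := Submonoid.mem_powers_iff _ _ |>.1 (hw g.right)
  exact mem_powers_mul_powers.2 ⟨a, b, by
    rw [← map_pow, ← map_pow, ha, hb, inl_left_mul_inr_right]⟩

theorem exists_metacyclic_generators [IsCyclic N] [IsCyclic H] [Finite N] [Finite H]
    (φ : H →* MulAut N) :
    ∃ (x y : N ⋊[φ] H) (r : ℕ), orderOf x = Nat.card N ∧ orderOf y = Nat.card H ∧
      SemiconjBy y x (x ^ r) ∧ ∀ g, g ∈ (powers x * powers y : Set (N ⋊[φ] H)) := by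
  obtain ⟨u, hu⟩ := IsCyclic.exists_generator (α := N)
  obtain ⟨w, hw⟩ := IsCyclic.exists_generator (α := H)
  have hu' (a) : a ∈ powers u := mem_powers_iff_mem_zpowers.2 (hu a)
  have hw' (b) : b ∈ powers w := mem_powers_iff_mem_zpowers.2 (hw b)
  obtain ⟨r, hr⟩ := Submonoid.mem_powers_iff _ _ |>.1 (hu' (φ w u))
  refine ⟨inl u, inr w, r, ?_, ?_, ?_, mem_powers_inl_mul_powers_inr hu' hw'⟩
  · rw [orderOf_injective _ inl_injective, orderOf_eq_card_of_forall_mem_zpowers hu]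
  · rw [orderOf_injective _ inr_injective, orderOf_eq_card_of_forall_mem_zpowers hw]
  · rw [← map_pow, hr]
    exact semiconjBy_inr_inl w u

end SemidirectProduct

/-- Every sequence of length `2m + 2mn − 3` over `C_m ⋉_φ C_{mn}` contains a
product-one subsequence of length exactly `mn`. -/
theorem product_one_subseq_eq_mn (m n : ℕ) (hm : 0 < m) (hn : 0 < n)
    (φ : Multiplicative (ZMod m) →* MulAut (Multiplicative (ZMod (m * n))))
    (S : Multiset (Multiplicative (ZMod (m * n)) ⋊[φ] Multiplicative (ZMod m)))
    (hS : Multiset.card S = 2 * m + 2 * (m * n) - 3) :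
    ∃ T ≤ S, Multiset.card T = m * n ∧ IsProductOne T := by
  have : NeZero m := ⟨hm.ne'⟩
  have : NeZero (m * n) := ⟨(Nat.mul_pos hm hn).ne'⟩
  obtain ⟨x, y, r, hx, hy, hyx, hmem⟩ := exists_metacyclic_generators φ
  rw [Nat.card_congr Multiplicative.toAdd, Nat.card_zmod] at hx hy
  have hym : y ^ m = 1 := orderOf_dvd_iff_pow_eq_one.1 hy.dvd
  have hr : r ^ m ≡ 1 [MOD m * n] := hx ▸ pow_modEq_one_of_semiconjBy hyx hym
  exact product_one_subseq_eq_mn_general hm hn (orderOf_dvd_iff_pow_eq_one.1 hx.dvd) hym hyx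
    (hr.of_dvd (dvd_mul_right m n)) S (fun g _ => hmem g) hS.ge
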